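/- arXiv:2109.13618 — 3 statements merged into one kernel-verified Lean document; each statement's English description precedes it below -/
import Mathlib

section
/- Let V ⊆ M_n(ℂ) be a linear subspace with basis (ξ_1,…,ξ_m) satisfying Tr(ξ_s* ξ_t) = n·δ_{st}, and let A_V(x) = ∑_s ξ_s x ξ_s* be its adjacency operator. Then A_V is self-adjoint with respect to the Frobenius inner product ⟨x,y⟩ = Tr(x* y) — equivalently ∑_s ξ_s x ξ_s* = ∑_s ξ_s* x ξ_s for all x ∈ M_n(ℂ) — if and only if V is closed under conjugate transpose, V* = V. (That is, the quantum graph on M_n determined by V is undirected exactly when V = V†.) -/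
open Matrix

/-- The quantum graph on `M_n` determined by a subspace `V ⊆ M_n(ℂ)` (with orthonormal
basis `(ξₛ)`, `Tr(ξₛ* ξₜ) = n·δ_{st}`, and adjacency operator `A_V(x) = ∑ₛ ξₛ x ξₛ*`) is
undirected — `A_V` is self-adjoint for the Frobenius inner product, equivalently
`∑ₛ ξₛ x ξₛ* = ∑ₛ ξₛ* x ξₛ` for all `x` — if and only if `V* = V`. -/
theorem stmt6 (n m : ℕ) (V : Submodule ℂ (Matrix (Fin n) (Fin n) ℂ))
    (ξ : Fin m → Matrix (Fin n) (Fin n) ℂ)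
    (hmem : ∀ s, ξ s ∈ V) (hind : LinearIndependent ℂ ξ)
    (hspan : Submodule.span ℂ (Set.range ξ) = V)
    (hon : ∀ s t, ((ξ s)ᴴ * ξ t).trace = if s = t then (n : ℂ) else 0) :
    (∀ x, ∑ s, ξ s * x * (ξ s)ᴴ = ∑ s, (ξ s)ᴴ * x * ξ s) ↔
      (fun x : Matrix (Fin n) (Fin n) ℂ => xᴴ) '' (V : Set (Matrix (Fin n) (Fin n) ℂ))
        = (V : Set (Matrix (Fin n) (Fin n) ℂ)) := by
  rcases Nat.eq_zero_or_pos n with hn | hn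
  · subst hn
    constructor
    · intro _
      ext y
      have h0 : y = 0 := Subsingleton.elim _ _
      subst h0
      constructor
      · intro _
        exact V.zero_mem
      · intro _
        exact ⟨0, V.zero_mem, Subsingleton.elim _ _⟩
    · intro _ x
      exact Subsingleton.elim _ _
  have hn0 : (n : ℂ) ≠ 0 := by exact_mod_cast hn.ne'
  have hexp : ∀ y ∈ V, (n : ℂ) • y = ∑ t, ((ξ t)ᴴ * y).trace • ξ t := by
    intro y hy
    rw [← hspan] at hy
    induction hy using Submodule.span_induction with
    | mem y hy =>
      obtain ⟨s, rfl⟩ := hy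
      simp [hon, ite_smul]
    | zero => simp
    | add a b _ _ ha hb =>
      simp only [smul_add, ha, hb, Matrix.mul_add, Matrix.trace_add, add_smul,
        Finset.sum_add_distrib]
    | smul c a _ ha =>
      rw [smul_comm, ha, Finset.smul_sum]
      simp [Matrix.trace_smul, smul_smul]
  constructor
  · intro h
    have hent : ∀ i a j b, ∑ s, ξ s i a * star (ξ s j b) = ∑ s, star (ξ s a i) * ξ s b j := by
      intro i a j b
      have h1 := congrFun (congrFun (h (Matrix.single a b 1)) i) j
      simpa [Matrix.sum_apply, Matrix.mul_apply, Matrix.single_apply, ite_and,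
        Finset.sum_ite_eq] using h1
    have hK : ∀ Y : Matrix (Fin n) (Fin n) ℂ,
        ∑ s, ((ξ s)ᴴ * Y).trace • ξ s = ∑ s, (Y * ξ s).trace • (ξ s)ᴴ := by
      intro Y
      ext i a
      have h2 : ∑ b, ∑ j, (∑ s, ξ s i a * star (ξ s j b)) * Y j b
          = ∑ b, ∑ j, (∑ s, star (ξ s a i) * ξ s b j) * Y j b := by
        simp only [hent]
      have hL : ∑ b, ∑ j, (∑ s, ξ s i a * star (ξ s j b)) * Y j b
          = (∑ s, ((ξ s)ᴴ * Y).trace • ξ s) i a := by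
        simp only [Matrix.sum_apply, Matrix.smul_apply, Matrix.trace, Matrix.diag_apply,
          Matrix.mul_apply, Matrix.conjTranspose_apply, smul_eq_mul, Finset.sum_mul]
        rw [Finset.sum_comm (s := (Finset.univ : Finset (Fin m)))]
        refine Finset.sum_congr rfl fun b _ => ?_
        rw [Finset.sum_comm]
        refine Finset.sum_congr rfl fun s _ => Finset.sum_congr rfl fun j _ => ?_
        ring
      have hR : ∑ b, ∑ j, (∑ s, star (ξ s a i) * ξ s b j) * Y j b
          = (∑ s, (Y * ξ s).trace • (ξ s)ᴴ) i a := by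
        simp only [Matrix.trace_mul_comm Y]
        simp only [Matrix.sum_apply, Matrix.smul_apply, Matrix.trace, Matrix.diag_apply,
          Matrix.mul_apply, Matrix.conjTranspose_apply, smul_eq_mul, Finset.sum_mul]
        rw [Finset.sum_comm (s := (Finset.univ : Finset (Fin m)))]
        refine Finset.sum_congr rfl fun b _ => ?_
        rw [Finset.sum_comm]
        refine Finset.sum_congr rfl fun s _ => Finset.sum_congr rfl fun j _ => ?_
        ring
      rw [← hL, ← hR, h2]
    have hV : ∀ t, (ξ t)ᴴ ∈ V := by
      intro t
      have h3 := hK (ξ t)ᴴ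
      have h4 : ∑ s, ((ξ t)ᴴ * ξ s).trace • (ξ s)ᴴ = (n : ℂ) • (ξ t)ᴴ := by
        simp [hon, ite_smul]
      rw [h4] at h3
      have h5 : (n : ℂ) • (ξ t)ᴴ ∈ V := by
        rw [← h3]
        exact V.sum_mem fun s _ => V.smul_mem _ (hmem s)
      exact (V.smul_mem_iff hn0).1 h5
    have hV' : ∀ y ∈ V, yᴴ ∈ V := by
      intro y hy
      rw [← hspan] at hy
      induction hy using Submodule.span_induction with
      | mem y hy =>
        obtain ⟨s, rfl⟩ := hy
        exact hV s
      | zero => simp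
      | add a b _ _ ha hb =>
        rw [Matrix.conjTranspose_add]
        exact V.add_mem ha hb
      | smul c a _ ha =>
        rw [Matrix.conjTranspose_smul]
        exact V.smul_mem _ ha
    ext y
    constructor
    · rintro ⟨z, hz, rfl⟩
      exact hV' z hz
    · intro hy
      exact ⟨yᴴ, hV' y hy, Matrix.conjTranspose_conjTranspose y⟩
  · intro h x
    have hV : ∀ s, (ξ s)ᴴ ∈ V := by
      intro s
      have h1 : (ξ s)ᴴ ∈ (fun x : Matrix (Fin n) (Fin n) ℂ => xᴴ) ''
          (V : Set (Matrix (Fin n) (Fin n) ℂ)) := ⟨ξ s, hmem s, rfl⟩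
      rw [h] at h1
      exact h1
    have hE := fun s => hexp _ (hV s)
    have hL : (n : ℂ) • ∑ s, ξ s * x * (ξ s)ᴴ
        = ∑ s, ∑ t, ((ξ t)ᴴ * (ξ s)ᴴ).trace • (ξ s * x * ξ t) := by
      rw [Finset.smul_sum]
      refine Finset.sum_congr rfl fun s _ => ?_
      rw [← Matrix.mul_smul, hE, Finset.mul_sum]
      simp only [Matrix.mul_smul]
    have hR : (n : ℂ) • ∑ s, (ξ s)ᴴ * x * ξ s
        = ∑ s, ∑ t, ((ξ t)ᴴ * (ξ s)ᴴ).trace • (ξ t * x * ξ s) := by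
      rw [Finset.smul_sum]
      refine Finset.sum_congr rfl fun s _ => ?_
      rw [← Matrix.smul_mul, ← Matrix.smul_mul, hE, Finset.sum_mul, Finset.sum_mul]
      simp only [Matrix.smul_mul]
    apply smul_right_injective _ hn0
    change (n : ℂ) • _ = (n : ℂ) • _
    rw [hL, hR, Finset.sum_comm]
    refine Finset.sum_congr rfl fun s _ => Finset.sum_congr rfl fun t _ => ?_
    rw [Matrix.trace_mul_comm]
end

section
/- Let V, W ⊆ M_n(ℂ) be linear subspaces with orthonormal bases (ξ_s), (ζ_t) in the sense Tr(ξ_s* ξ_t) = n·δ_{st}, Tr(ζ_s* ζ_t) = n·δ_{st}, and let A_V, A_W be the associated adjacency operators. Then the following are equivalent: (i) there exists a star-algebra automorphism φ of M_n(ℂ) with φ ∘ A_V = A_W ∘ φ (i.e. the quantum graphs (M_n, Ã_V) and (M_n, Ã_W) are isomorphic); (ii) there exists a unitary U ∈ M_n(ℂ) with W = U V U* := { U ξ U* : ξ ∈ V } (and U may be chosen with determinant 1). -/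
open Matrix

/-- Expansion of an element of the span in an orthonormal family. -/
lemma expand_aux {n m : ℕ} (ξ : Fin m → Matrix (Fin n) (Fin n) ℂ)
    (hon : ∀ s t, ((ξ s)ᴴ * ξ t).trace = if s = t then (n : ℂ) else 0)
    (w : Matrix (Fin n) (Fin n) ℂ) (hw : w ∈ Submodule.span ℂ (Set.range ξ)) :
    ∑ s, ((ξ s)ᴴ * w).trace • ξ s = (n : ℂ) • w := by
  induction hw using Submodule.span_induction with
  | mem x hx =>
    obtain ⟨t, rfl⟩ := hx
    simp [hon, ite_smul]
  | zero => simp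
  | add x y _ _ hx hy =>
    simp only [Matrix.mul_add, Matrix.trace_add, add_smul, Finset.sum_add_distrib, hx, hy, smul_add]
  | smul a x _ hx =>
    simp only [Matrix.mul_smul, Matrix.trace_smul, smul_eq_mul, mul_smul]
    rw [← Finset.smul_sum, hx, smul_comm]

/-- Equal spans give equal adjacency operators. -/
lemma adj_eq_of_span {n m k : ℕ} (hn : n ≠ 0) (ξ : Fin m → Matrix (Fin n) (Fin n) ℂ)
    (ζ : Fin k → Matrix (Fin n) (Fin n) ℂ)
    (hξ : ∀ s t, ((ξ s)ᴴ * ξ t).trace = if s = t then (n : ℂ) else 0)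
    (hζ : ∀ s t, ((ζ s)ᴴ * ζ t).trace = if s = t then (n : ℂ) else 0)
    (h : Submodule.span ℂ (Set.range ξ) = Submodule.span ℂ (Set.range ζ))
    (y : Matrix (Fin n) (Fin n) ℂ) :
    ∑ s, ξ s * y * (ξ s)ᴴ = ∑ t, ζ t * y * (ζ t)ᴴ := by
  have hnC : (n : ℂ) ≠ 0 := by exact_mod_cast hn
  have h1 : ∀ s, (n : ℂ) • ξ s = ∑ t, ((ζ t)ᴴ * ξ s).trace • ζ t := fun s =>
    (expand_aux ζ hζ (ξ s) (h ▸ Submodule.subset_span ⟨s, rfl⟩)).symm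
  have h2 : ∀ t, (n : ℂ) • ζ t = ∑ s, ((ξ s)ᴴ * ζ t).trace • ξ s := fun t =>
    (expand_aux ξ hξ (ζ t) (h ▸ Submodule.subset_span ⟨t, rfl⟩)).symm
  have h2' : ∀ t, (n : ℂ) • (ζ t)ᴴ = ∑ s, ((ζ t)ᴴ * ξ s).trace • (ξ s)ᴴ := fun t => by
    have := congrArg Matrix.conjTranspose (h2 t)
    rw [Matrix.conjTranspose_smul, Matrix.conjTranspose_sum] at this
    simp only [Matrix.conjTranspose_smul, ← Matrix.trace_conjTranspose, Matrix.conjTranspose_mul,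
      Matrix.conjTranspose_conjTranspose] at this
    simpa using this
  have h3 : (n : ℂ) • ∑ s, ξ s * y * (ξ s)ᴴ = (n : ℂ) • ∑ t, ζ t * y * (ζ t)ᴴ := by
    calc (n : ℂ) • ∑ s, ξ s * y * (ξ s)ᴴ = ∑ s, ((n : ℂ) • ξ s) * y * (ξ s)ᴴ := by
          simp [Finset.smul_sum]
      _ = ∑ s, ∑ t, ((ζ t)ᴴ * ξ s).trace • (ζ t * y * (ξ s)ᴴ) := by
          simp only [h1, Finset.sum_mul, Matrix.smul_mul]
      _ = ∑ t, ∑ s, ((ζ t)ᴴ * ξ s).trace • (ζ t * y * (ξ s)ᴴ) := Finset.sum_comm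
      _ = ∑ t, ζ t * y * ((n : ℂ) • (ζ t)ᴴ) := by
          simp only [h2', Finset.mul_sum, Matrix.mul_smul]
      _ = _ := by simp [Finset.smul_sum]
  exact smul_right_injective _ hnC h3

/-- Equal adjacency operators give equal Choi kernels. -/
lemma kernel_eq {n m k : ℕ} (ξ : Fin m → Matrix (Fin n) (Fin n) ℂ)
    (ζ : Fin k → Matrix (Fin n) (Fin n) ℂ)
    (h : ∀ y, ∑ s, ξ s * y * (ξ s)ᴴ = ∑ t, ζ t * y * (ζ t)ᴴ) (z : Matrix (Fin n) (Fin n) ℂ) :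
    ∑ s, ((ξ s)ᴴ * z).trace • ξ s = ∑ t, ((ζ t)ᴴ * z).trace • ζ t := by
  have key : ∀ (l : ℕ) (η : Fin l → Matrix (Fin n) (Fin n) ℂ) (a i : Fin n),
      (∑ s, ((η s)ᴴ * z).trace • η s) a i
        = ∑ j, ∑ b, z b j * (∑ s, η s * Matrix.single i j (1 : ℂ) * (η s)ᴴ : Matrix (Fin n) (Fin n) ℂ) a b := by
    intro l η a i
    have e : ∀ s j b, (η s * Matrix.single i j (1 : ℂ) * (η s)ᴴ) a b
        = η s a i * star (η s b j) := by
      intro s j b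
      rw [Matrix.mul_apply, Finset.sum_eq_single j]
      · simp
      · intro c _ hc
        rw [Matrix.mul_single_apply_of_ne _ _ _ _ _ hc, zero_mul]
      · simp
    simp only [Matrix.sum_apply, e]
    simp only [Matrix.smul_apply, Matrix.trace, Matrix.diag, Matrix.mul_apply,
      smul_eq_mul, Matrix.conjTranspose_apply, Finset.sum_mul, Finset.mul_sum]
    rw [Finset.sum_comm]
    refine Finset.sum_congr rfl fun j _ => ?_
    rw [Finset.sum_comm]
    refine Finset.sum_congr rfl fun b _ => Finset.sum_congr rfl fun s _ => ?_
    ring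
  ext a i
  rw [key, key]
  simp only [h]

lemma span_le_of_adj {n m k : ℕ} (hn : n ≠ 0) (ξ : Fin m → Matrix (Fin n) (Fin n) ℂ)
    (ζ : Fin k → Matrix (Fin n) (Fin n) ℂ)
    (hξ : ∀ s t, ((ξ s)ᴴ * ξ t).trace = if s = t then (n : ℂ) else 0)
    (h : ∀ y, ∑ s, ξ s * y * (ξ s)ᴴ = ∑ t, ζ t * y * (ζ t)ᴴ) :
    Submodule.span ℂ (Set.range ξ) ≤ Submodule.span ℂ (Set.range ζ) := by
  have hnC : (n : ℂ) ≠ 0 := by exact_mod_cast hn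
  intro w hw
  have h1 := expand_aux ξ hξ w hw
  rw [kernel_eq ξ ζ h] at h1
  rw [← Submodule.smul_mem_iff _ hnC, ← h1]
  exact Submodule.sum_mem _ fun t _ => Submodule.smul_mem _ _ (Submodule.subset_span ⟨t, rfl⟩)

/-- Star automorphisms of the matrix algebra are implemented by special unitaries. -/
lemma star_aut_inner {n : ℕ} (hn : n ≠ 0)
    (φ : Matrix (Fin n) (Fin n) ℂ ≃ₐ[ℂ] Matrix (Fin n) (Fin n) ℂ)
    (hφ : ∀ x, φ xᴴ = (φ x)ᴴ) :
    ∃ U ∈ Matrix.unitaryGroup (Fin n) ℂ, U.det = 1 ∧ ∀ x, φ x = U * x * Uᴴ := by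
  obtain ⟨T, hT⟩ := AlgEquiv.eq_linearEquivConjAlgEquiv
    ((Matrix.toLinAlgEquiv' (R := ℂ) (n := Fin n)).symm.trans
      (φ.trans (Matrix.toLinAlgEquiv' (R := ℂ) (n := Fin n))))
  obtain ⟨P, Q, hPQ, hQP, hφP⟩ : ∃ P Q : Matrix (Fin n) (Fin n) ℂ, P * Q = 1 ∧ Q * P = 1 ∧
      ∀ x, φ x = P * x * Q := by
    refine ⟨LinearMap.toMatrix' T.toLinearMap, LinearMap.toMatrix' T.symm.toLinearMap, ?_, ?_, ?_⟩
    · rw [← LinearMap.toMatrix'_comp]; simp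
    · rw [← LinearMap.toMatrix'_comp]; simp
    · intro x
      have := congrArg LinearMap.toMatrix' (DFunLike.congr_fun hT (Matrix.toLin' x))
      rw [LinearEquiv.conjAlgEquiv_apply, LinearMap.toMatrix'_comp, LinearMap.toMatrix'_comp,
        LinearMap.toMatrix'_toLin', ← mul_assoc] at this
      rw [← this]
      change φ x = LinearMap.toMatrix' (Matrix.toLin' (φ (LinearMap.toMatrix' (Matrix.toLin' x))))
      simp
  have hPQs : Pᴴ * Qᴴ = 1 := by rw [← Matrix.conjTranspose_mul, hQP, Matrix.conjTranspose_one]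
  have hcomm : ∀ x, Pᴴ * P * x = x * (Pᴴ * P) := by
    intro x
    have h1 := hφ xᴴ
    simp only [hφP, Matrix.conjTranspose_mul, Matrix.conjTranspose_conjTranspose] at h1
    calc Pᴴ * P * x = Pᴴ * (P * x * Q) * P := by
          simp only [mul_assoc, hQP, mul_one]
      _ = (Pᴴ * Qᴴ) * x * (Pᴴ * P) := by rw [h1]; simp only [mul_assoc]
      _ = _ := by rw [hPQs, one_mul]
  obtain ⟨c, hc⟩ : ∃ c : ℂ, Pᴴ * P = c • (1 : Matrix (Fin n) (Fin n) ℂ) := by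
    have : Pᴴ * P ∈ Set.range (Matrix.scalar (Fin n)) :=
      Matrix.mem_range_scalar_iff_commute_single'.2 fun i j => (hcomm _).symm
    obtain ⟨c, hc⟩ := this
    exact ⟨c, by rw [← hc, Matrix.scalar_apply, Matrix.smul_one_eq_diagonal]⟩
  have hdet : P.det ≠ 0 := by
    intro h0
    have := congrArg Matrix.det hPQ
    simp [h0] at this
  obtain ⟨d, hd⟩ := IsAlgClosed.exists_pow_nat_eq P.det (Nat.pos_of_ne_zero hn)
  have hd0 : d ≠ 0 := by
    rintro rfl
    rw [zero_pow hn] at hd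
    exact hdet hd.symm
  obtain ⟨r, hr0, hr⟩ : ∃ r : ℝ, 0 ≤ r ∧ c = r := by
    let i : Fin n := ⟨0, Nat.pos_of_ne_zero hn⟩
    have h1 := congrFun (congrFun hc i) i
    simp only [Matrix.mul_apply, Matrix.conjTranspose_apply, Matrix.smul_apply, Matrix.one_apply_eq,
      smul_eq_mul, mul_one] at h1
    refine ⟨∑ j, Complex.normSq (P j i), Finset.sum_nonneg fun j _ => Complex.normSq_nonneg _, ?_⟩
    rw [← h1, Complex.ofReal_sum]
    refine Finset.sum_congr rfl fun j _ => ?_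
    rw [Complex.normSq_eq_conj_mul_self]; rfl
  have hcd : star d * d = c := by
    have h1 := congrArg Matrix.det hc
    rw [Matrix.det_mul, Matrix.det_conjTranspose, Matrix.det_smul, Matrix.det_one, ← hd,
      Fintype.card_fin, mul_one, star_pow, ← mul_pow, hr] at h1
    have h2 : star d * d = ((Complex.normSq d : ℝ) : ℂ) := by
      rw [Complex.normSq_eq_conj_mul_self]; rfl
    rw [h2] at h1 ⊢
    rw [hr]
    have h3 : Complex.normSq d ^ n = r ^ n := by exact_mod_cast h1
    rw [(pow_left_inj₀ (Complex.normSq_nonneg _) hr0 hn).1 h3]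
  have hsd0 : star d ≠ 0 := star_ne_zero.2 hd0
  have hUU : (d⁻¹ • P)ᴴ * (d⁻¹ • P) = 1 := by
    rw [Matrix.conjTranspose_smul, Matrix.smul_mul, Matrix.mul_smul, hc, ← hcd, smul_smul, smul_smul,
      star_inv₀]
    have : (star d)⁻¹ * (d⁻¹ * (star d * d)) = 1 := by field_simp
    rw [← mul_assoc] at this
    rw [this, one_smul]
  refine ⟨d⁻¹ • P, Matrix.mem_unitaryGroup_iff'.2 hUU, ?_, ?_⟩
  · rw [Matrix.det_smul, Fintype.card_fin, ← hd, ← mul_pow, inv_mul_cancel₀ hd0, one_pow]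
  · intro x
    have hQ : d • Q = (d⁻¹ • P)ᴴ := by
      calc d • Q = ((d⁻¹ • P)ᴴ * (d⁻¹ • P)) * (d • Q) := by rw [hUU, one_mul]
        _ = (d⁻¹ • P)ᴴ * ((d⁻¹ * d) • (P * Q)) := by
            rw [mul_assoc, Matrix.smul_mul d⁻¹ P, Matrix.mul_smul P, smul_smul]
        _ = _ := by rw [inv_mul_cancel₀ hd0, hPQ, one_smul, mul_one]
    rw [← hQ, hφP, Matrix.smul_mul, Matrix.smul_mul, Matrix.mul_smul, smul_smul,
      inv_mul_cancel₀ hd0, one_smul]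

/-- Conjugation by a unitary as an algebra automorphism. -/
lemma exists_conj {n : ℕ} (U : Matrix (Fin n) (Fin n) ℂ) (h1 : Uᴴ * U = 1) (h2 : U * Uᴴ = 1) :
    ∃ φ : Matrix (Fin n) (Fin n) ℂ ≃ₐ[ℂ] Matrix (Fin n) (Fin n) ℂ, ∀ x, φ x = U * x * Uᴴ := by
  exact ⟨(Unitary.conjStarAlgAut ℂ (Matrix (Fin n) (Fin n) ℂ)
    ⟨U, Unitary.mem_iff.2 ⟨h1, h2⟩⟩).toAlgEquiv, fun x => rfl⟩

/-- For subspaces `V, W ⊆ M_n(ℂ)` with orthonormal bases (`Tr(ξₛ* ξₜ) = n·δ_{st}`) and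
associated adjacency operators `A_V, A_W`, the quantum graphs `(M_n, Ã_V)` and
`(M_n, Ã_W)` are isomorphic — i.e. there is a star-algebra automorphism `φ` of `M_n(ℂ)`
with `φ ∘ A_V = A_W ∘ φ` — if and only if `W = U V U*` for some unitary `U` (which may be
chosen with determinant 1). -/
theorem stmt8 (n m k : ℕ) (V W : Submodule ℂ (Matrix (Fin n) (Fin n) ℂ))
    (ξ : Fin m → Matrix (Fin n) (Fin n) ℂ) (ζ : Fin k → Matrix (Fin n) (Fin n) ℂ)
    (hξmem : ∀ s, ξ s ∈ V) (hζmem : ∀ t, ζ t ∈ W)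
    (hξind : LinearIndependent ℂ ξ) (hζind : LinearIndependent ℂ ζ)
    (hξspan : Submodule.span ℂ (Set.range ξ) = V)
    (hζspan : Submodule.span ℂ (Set.range ζ) = W)
    (hξon : ∀ s t, ((ξ s)ᴴ * ξ t).trace = if s = t then (n : ℂ) else 0)
    (hζon : ∀ s t, ((ζ s)ᴴ * ζ t).trace = if s = t then (n : ℂ) else 0) :
    (∃ φ : Matrix (Fin n) (Fin n) ℂ ≃ₐ[ℂ] Matrix (Fin n) (Fin n) ℂ,
        (∀ x, φ xᴴ = (φ x)ᴴ) ∧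
        ∀ x, φ (∑ s, ξ s * x * (ξ s)ᴴ) = ∑ t, ζ t * (φ x) * (ζ t)ᴴ) ↔
      (∃ U ∈ Matrix.unitaryGroup (Fin n) ℂ, U.det = 1 ∧
        (W : Set (Matrix (Fin n) (Fin n) ℂ))
          = (fun x => U * x * Uᴴ) '' (V : Set (Matrix (Fin n) (Fin n) ℂ))) := by
  rcases Nat.eq_zero_or_pos n with rfl | hpos
  · refine iff_of_true ⟨AlgEquiv.refl, fun x => rfl, fun x => Subsingleton.elim _ _⟩
      ⟨1, one_mem _, Matrix.det_one, ?_⟩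
    ext x
    constructor
    · intro _
      exact ⟨0, V.zero_mem, Subsingleton.elim _ _⟩
    · intro _
      rw [Subsingleton.elim x 0]
      exact W.zero_mem
  have hn : n ≠ 0 := Nat.pos_iff_ne_zero.1 hpos
  have hη : ∀ U : Matrix (Fin n) (Fin n) ℂ, Uᴴ * U = 1 →
      (∀ s t, ((U * ξ s * Uᴴ)ᴴ * (U * ξ t * Uᴴ)).trace = if s = t then (n : ℂ) else 0) ∧
      ((Submodule.span ℂ (Set.range fun s => U * ξ s * Uᴴ) :
          Submodule ℂ (Matrix (Fin n) (Fin n) ℂ)) : Set (Matrix (Fin n) (Fin n) ℂ))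
        = (fun x => U * x * Uᴴ) '' (V : Set (Matrix (Fin n) (Fin n) ℂ)) ∧
      ∀ x, U * (∑ s, ξ s * x * (ξ s)ᴴ) * Uᴴ
        = ∑ s, (U * ξ s * Uᴴ) * (U * x * Uᴴ) * (U * ξ s * Uᴴ)ᴴ := by
    intro U hU
    have hU' : ∀ z, Uᴴ * (U * z) = z := fun z => by rw [← mul_assoc, hU, one_mul]
    refine ⟨fun s t => ?_, ?_, fun x => ?_⟩
    · rw [← hξon s t]
      simp only [Matrix.conjTranspose_mul, Matrix.conjTranspose_conjTranspose, mul_assoc, hU']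
      rw [Matrix.trace_mul_comm]
      simp only [mul_assoc, hU, mul_one]
    · let L : Matrix (Fin n) (Fin n) ℂ →ₗ[ℂ] Matrix (Fin n) (Fin n) ℂ :=
        (LinearMap.mulRight ℂ Uᴴ) ∘ₗ (LinearMap.mulLeft ℂ U)
      have hL : (fun s => U * ξ s * Uᴴ) = L ∘ ξ := by ext s : 1; rfl
      rw [hL, Set.range_comp, Submodule.span_image, hξspan, Submodule.map_coe]
      rfl
    · simp only [Finset.mul_sum, Finset.sum_mul, Matrix.conjTranspose_mul,
        Matrix.conjTranspose_conjTranspose, mul_assoc, hU']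
  constructor
  · rintro ⟨φ, hstar, hφ⟩
    obtain ⟨U, hU, hdet, hφU⟩ := star_aut_inner hn φ hstar
    have hU1 : Uᴴ * U = 1 := Matrix.mem_unitaryGroup_iff'.1 hU
    obtain ⟨hon, hspan, hadj⟩ := hη U hU1
    refine ⟨U, hU, hdet, ?_⟩
    rw [← hspan, ← hζspan]
    have h : ∀ y, ∑ s, (U * ξ s * Uᴴ) * y * (U * ξ s * Uᴴ)ᴴ = ∑ t, ζ t * y * (ζ t)ᴴ := by
      intro y
      obtain ⟨x, rfl⟩ := φ.surjective y
      rw [← hφ, hφU, hφU, hadj]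
    exact congrArg _ (le_antisymm (span_le_of_adj hn ζ _ hζon fun y => (h y).symm)
      (span_le_of_adj hn _ ζ hon h))
  · rintro ⟨U, hU, -, hW⟩
    have hU1 : Uᴴ * U = 1 := Matrix.mem_unitaryGroup_iff'.1 hU
    have hU2 : U * Uᴴ = 1 := Matrix.mem_unitaryGroup_iff.1 hU
    obtain ⟨hon, hspan, hadj⟩ := hη U hU1
    obtain ⟨φ, hφ⟩ := exists_conj U hU1 hU2
    refine ⟨φ, fun x => ?_, fun x => ?_⟩
    · simp only [hφ, Matrix.conjTranspose_mul, Matrix.conjTranspose_conjTranspose, mul_assoc]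
    · rw [hφ, hφ, hadj]
      refine adj_eq_of_span hn _ ζ hon hζon (SetLike.coe_injective ?_) _
      rw [hspan, hζspan, hW]
end

section
/- Let V and W be complex linear subspaces of M_2(ℂ) such that every element of V and of W is traceless, V and W are closed under conjugate transpose (V* = V, W* = W), and dim_ℂ V = dim_ℂ W. Then there exists a special unitary matrix U ∈ SU(2) such that W = U V U* := { U ξ U* : ξ ∈ V }. (Consequently, a simple quantum graph on the quantum space M_2 is determined up to isomorphism solely by its number of quantum edges m ∈ {0,1,2,3}.) -/
open Matrix

/-- Conjugation by `U` as a linear map. -/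
def conjL (U : Matrix (Fin 2) (Fin 2) ℂ) :
    Matrix (Fin 2) (Fin 2) ℂ →ₗ[ℂ] Matrix (Fin 2) (Fin 2) ℂ where
  toFun x := U * x * Uᴴ
  map_add' x y := by rw [mul_add, add_mul]
  map_smul' c x := by simp

lemma conjL_apply (U x : Matrix (Fin 2) (Fin 2) ℂ) : conjL U x = U * x * Uᴴ := rfl

lemma conjL_inv {U : Matrix (Fin 2) (Fin 2) ℂ} (h : Uᴴ * U = 1)
    (x : Matrix (Fin 2) (Fin 2) ℂ) : Uᴴ * (U * x * Uᴴ) * U = x := by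
  calc Uᴴ * (U * x * Uᴴ) * U = (Uᴴ * U) * x * (Uᴴ * U) := by noncomm_ring
    _ = x := by rw [h]; simp

lemma conjL_inj {U : Matrix (Fin 2) (Fin 2) ℂ} (h : Uᴴ * U = 1) :
    Function.Injective (conjL U) := by
  intro x y hxy
  rw [← conjL_inv h x, ← conjL_inv h y]
  rw [conjL_apply, conjL_apply] at hxy
  rw [hxy]

lemma diag_herm (h : Matrix (Fin 2) (Fin 2) ℂ) (hh : h.IsHermitian) :
    ∃ U : Matrix (Fin 2) (Fin 2) ℂ, Uᴴ * U = 1 ∧ U * Uᴴ = 1 ∧ U.det = 1 ∧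
      ∃ d : Fin 2 → ℂ, U * h * Uᴴ = diagonal d := by
  obtain ⟨P, hP1, hP2, d, hd⟩ : ∃ P : Matrix (Fin 2) (Fin 2) ℂ, Pᴴ * P = 1 ∧ P * Pᴴ = 1 ∧
      ∃ d : Fin 2 → ℂ, P * h * Pᴴ = diagonal d := by
    set Q := hh.eigenvectorUnitary with hQ
    have h1 : (Q : Matrix (Fin 2) (Fin 2) ℂ)ᴴ * Q = 1 := Unitary.coe_star_mul_self Q
    have h2 : (Q : Matrix (Fin 2) (Fin 2) ℂ) * (Q : Matrix (Fin 2) (Fin 2) ℂ)ᴴ = 1 :=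
      Unitary.coe_mul_star_self Q
    refine ⟨(Q : Matrix (Fin 2) (Fin 2) ℂ)ᴴ, by simpa using h2, by simpa using h1,
      (RCLike.ofReal ∘ hh.eigenvalues), ?_⟩
    have h3 : h = (Q : Matrix (Fin 2) (Fin 2) ℂ) *
        diagonal (RCLike.ofReal ∘ hh.eigenvalues : Fin 2 → ℂ) * (Q : Matrix (Fin 2) (Fin 2) ℂ)ᴴ := by
      conv_lhs => rw [hh.spectral_theorem]
      rfl
    conv_lhs => rw [h3]
    simpa using conjL_inv h1 _
  have hdet : star P.det * P.det = 1 := by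
    rw [← det_conjTranspose, ← det_mul, hP1, det_one]
  have hdet' : P.det * star P.det = 1 := by rw [mul_comm]; exact hdet
  set D : Matrix (Fin 2) (Fin 2) ℂ := diagonal ![star P.det, 1] with hD
  have hDs : Dᴴ = diagonal ![P.det, 1] := by
    rw [hD, diagonal_conjTranspose]
    congr 1
    ext i; fin_cases i <;> simp
  have e1 : Dᴴ * D = 1 := by
    rw [hDs, hD, diagonal_mul_diagonal, ← diagonal_one]
    congr 1
    ext i; fin_cases i
    · exact hdet'
    · simp
  have e2 : D * Dᴴ = 1 := mul_eq_one_comm.mp e1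
  refine ⟨D * P, ?_, ?_, ?_, d, ?_⟩
  · calc (D * P)ᴴ * (D * P) = Pᴴ * (Dᴴ * D) * P := by rw [conjTranspose_mul]; noncomm_ring
      _ = 1 := by rw [e1]; simpa using hP1
  · calc (D * P) * (D * P)ᴴ = D * (P * Pᴴ) * Dᴴ := by rw [conjTranspose_mul]; noncomm_ring
      _ = 1 := by rw [hP2]; simpa using e2
  · rw [det_mul, hD, det_diagonal]
    simpa using hdet
  · calc (D * P) * h * (D * P)ᴴ = D * (P * h * Pᴴ) * Dᴴ := by
          rw [conjTranspose_mul]; noncomm_ring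
      _ = diagonal d * (D * Dᴴ) := by
          rw [hd, hD, diagonal_mul_diagonal, ← mul_assoc, diagonal_mul_diagonal]
          simp only [mul_comm]
      _ = diagonal d := by rw [e2, mul_one]

abbrev sZ : Matrix (Fin 2) (Fin 2) ℂ := !![1, 0; 0, -1]
abbrev e01 : Matrix (Fin 2) (Fin 2) ℂ := !![0, 1; 0, 0]
abbrev e10 : Matrix (Fin 2) (Fin 2) ℂ := !![0, 0; 1, 0]

lemma diag_tl (h : Matrix (Fin 2) (Fin 2) ℂ) (hh : h.IsHermitian) (ht : h.trace = 0)
    (h0 : h ≠ 0) :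
    ∃ U : Matrix (Fin 2) (Fin 2) ℂ, Uᴴ * U = 1 ∧ U * Uᴴ = 1 ∧ U.det = 1 ∧
      ∃ c : ℂ, c ≠ 0 ∧ U * h * Uᴴ = c • sZ := by
  obtain ⟨U, h1, h2, h3, d, hd⟩ := diag_herm h hh
  have htr : d 0 + d 1 = 0 := by
    have : (U * h * Uᴴ).trace = 0 := by
      rw [trace_mul_comm, ← mul_assoc, h1, one_mul, ht]
    rw [hd, trace_diagonal] at this
    simpa using this
  have hd' : U * h * Uᴴ = d 0 • sZ := by
    rw [hd]
    ext i j
    fin_cases i <;> fin_cases j <;> simp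
    linear_combination htr
  refine ⟨U, h1, h2, h3, d 0, ?_, hd'⟩
  intro hc
  apply h0
  rw [← conjL_inv h1 h, hd', hc]
  simp

/-- A nonzero star-closed subspace contains a nonzero hermitian element. -/
lemma exists_herm (V : Submodule ℂ (Matrix (Fin 2) (Fin 2) ℂ))
    (hs : ∀ x ∈ V, xᴴ ∈ V) (x : Matrix (Fin 2) (Fin 2) ℂ) (hx : x ∈ V) (h0 : x ≠ 0) :
    ∃ h ∈ V, h.IsHermitian ∧ h ≠ 0 := by
  by_cases hp : x + xᴴ = 0
  · refine ⟨Complex.I • x, V.smul_mem _ hx, ?_, ?_⟩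
    · have : xᴴ = -x := by rw [eq_neg_iff_add_eq_zero, add_comm]; exact hp
      rw [IsHermitian, conjTranspose_smul, this]
      simp
    · simp [h0]
  · exact ⟨_, V.add_mem hx (hs x hx), by simp [IsHermitian, add_comm], hp⟩

/-- Normal forms. -/
def nf : ℕ → Submodule ℂ (Matrix (Fin 2) (Fin 2) ℂ)
  | 0 => ⊥
  | 1 => Submodule.span ℂ {sZ}
  | 2 => Submodule.span ℂ ((({e01, e10} : Finset _)) : Set (Matrix (Fin 2) (Fin 2) ℂ))
  | _ => Submodule.span ℂ ((({sZ, e01, e10} : Finset _)) : Set (Matrix (Fin 2) (Fin 2) ℂ))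

lemma exists_nf (V : Submodule ℂ (Matrix (Fin 2) (Fin 2) ℂ))
    (ht : ∀ x ∈ V, x.trace = 0) (hs : ∀ x ∈ V, xᴴ ∈ V) :
    ∃ U : Matrix (Fin 2) (Fin 2) ℂ, Uᴴ * U = 1 ∧ U * Uᴴ = 1 ∧ U.det = 1 ∧
      V.map (conjL U) = nf (Module.finrank ℂ V) := by
  have hfr : ∀ U : Matrix (Fin 2) (Fin 2) ℂ, Uᴴ * U = 1 →
      Module.finrank ℂ (V.map (conjL U)) = Module.finrank ℂ V := fun U hU =>
    (LinearEquiv.finrank_eq (Submodule.equivMapOfInjective _ (conjL_inj hU) V)).symm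
  have htU : ∀ U x : Matrix (Fin 2) (Fin 2) ℂ, Uᴴ * U = 1 → x ∈ V →
      (U * x * Uᴴ) 0 0 + (U * x * Uᴴ) 1 1 = 0 := by
    intro U x hU hx
    have : (U * x * Uᴴ).trace = 0 := by
      rw [trace_mul_comm, ← mul_assoc, hU, one_mul, ht x hx]
    rwa [trace_fin_two] at this
  match hm : Module.finrank ℂ V with
  | 0 =>
    refine ⟨1, by simp, by simp, by simp, ?_⟩
    rw [Submodule.finrank_eq_zero] at hm
    simp [hm, nf]
  | 1 =>
    have hV : V ≠ ⊥ := by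
      rintro rfl
      simp at hm
    obtain ⟨x, hx, hx0⟩ := V.ne_bot_iff.mp hV
    obtain ⟨h, hhV, hh, h0⟩ := exists_herm V hs x hx hx0
    obtain ⟨U, h1, h2, h3, c, hc, hd⟩ := diag_tl h hh (ht h hhV) h0
    refine ⟨U, h1, h2, h3, ?_⟩
    symm
    apply Submodule.eq_of_le_of_finrank_eq
    · rw [nf, Submodule.span_le, Set.singleton_subset_iff]
      refine ⟨c⁻¹ • h, V.smul_mem _ hhV, ?_⟩
      rw [map_smul, conjL_apply, hd, smul_smul, inv_mul_cancel₀ hc, one_smul]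
    · rw [hfr U h1, hm, nf, finrank_span_singleton]
      intro h
      simpa using congrFun (congrFun h 0) 0
  | 2 =>
    let f : Matrix (Fin 2) (Fin 2) ℂ →ₗ[ℂ] (Module.Dual ℂ V × ℂ) :=
      LinearMap.prod
        (LinearMap.mk₂ ℂ (fun (y : Matrix (Fin 2) (Fin 2) ℂ) (x : V) => ((x : Matrix _ _ ℂ) * y).trace)
          (by intros; simp [mul_add]) (by intros; simp) (by intros; simp [add_mul])
          (by intros; simp))
        (Matrix.traceLinearMap (Fin 2) ℂ ℂ)
    have hk : LinearMap.ker f ≠ ⊥ := by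
      apply LinearMap.ker_ne_bot_of_finrank_lt
      rw [Module.finrank_prod, Subspace.dual_finrank_eq, hm, Module.finrank_matrix]
      simp
    have hmem : ∀ y, y ∈ LinearMap.ker f ↔ (∀ x ∈ V, (x * y).trace = 0) ∧ y.trace = 0 := by
      intro y
      rw [LinearMap.mem_ker]
      simp only [f, LinearMap.prod_apply, Function.prod_apply, Prod.mk_eq_zero]
      refine and_congr ?_ Iff.rfl
      rw [LinearMap.ext_iff]
      simp
    obtain ⟨y, hy, hy0⟩ := (Submodule.ne_bot_iff _).mp hk
    obtain ⟨h, hhV, hh, h0⟩ := exists_herm (LinearMap.ker f) (by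
      intro y hy
      rw [hmem] at hy ⊢
      refine ⟨fun x hx => ?_, by rw [trace_conjTranspose, hy.2, star_zero]⟩
      have := hy.1 _ (hs x hx)
      rw [trace_mul_comm, ← conjTranspose_conjTranspose x, ← conjTranspose_mul,
        trace_conjTranspose, this, star_zero]) y hy hy0
    rw [hmem] at hhV
    obtain ⟨U, h1, h2, h3, c, hc, hd⟩ := diag_tl h hh hhV.2 h0
    refine ⟨U, h1, h2, h3, ?_⟩
    apply Submodule.eq_of_le_of_finrank_le
    · rintro _ ⟨x, hx, rfl⟩
      have ha := htU U x h1 hx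
      have hb : ((U * x * Uᴴ) * (c • sZ)).trace = 0 := by
        rw [← hd]
        have : U * x * Uᴴ * (U * h * Uᴴ) = U * (x * h) * Uᴴ := by
          calc _ = U * x * (Uᴴ * U) * h * Uᴴ := by noncomm_ring
            _ = _ := by rw [h1]; noncomm_ring
        rw [this, trace_mul_comm, ← mul_assoc, h1, one_mul, hhV.1 x hx]
      rw [conjL_apply]
      generalize U * x * Uᴴ = z at ha hb
      rw [Matrix.mul_smul, trace_smul, smul_eq_zero_iff_right hc, trace_fin_two] at hb
      simp [mul_apply, Fin.sum_univ_two] at hb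
      have z0 : z 0 0 = 0 := by linear_combination (ha + hb) / 2
      have z1 : z 1 1 = 0 := by linear_combination (ha - hb) / 2
      have : z = z 0 1 • e01 + z 1 0 • e10 := by
        ext i j
        fin_cases i <;> fin_cases j <;> simp [z0, z1]
      rw [this, nf]
      exact Submodule.add_mem _ (Submodule.smul_mem _ _ (Submodule.subset_span (by simp)))
        (Submodule.smul_mem _ _ (Submodule.subset_span (by simp)))
    · rw [hfr U h1, hm, nf]
      exact (finrank_span_finset_le_card _).trans Finset.card_le_two
  | (n + 3) =>
    refine ⟨1, by simp, by simp, by simp, ?_⟩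
    apply Submodule.eq_of_le_of_finrank_le
    · rintro _ ⟨x, hx, rfl⟩
      have ha := htU 1 x (by simp) hx
      rw [conjL_apply]
      generalize (1 : Matrix (Fin 2) (Fin 2) ℂ) * x * (1)ᴴ = z at ha
      have : z = z 0 0 • sZ + z 0 1 • e01 + z 1 0 • e10 := by
        ext i j
        fin_cases i <;> fin_cases j <;> simp
        linear_combination ha
      rw [this, nf]
      · exact Submodule.add_mem _ (Submodule.add_mem _
          (Submodule.smul_mem _ _ (Submodule.subset_span (by simp)))
          (Submodule.smul_mem _ _ (Submodule.subset_span (by simp))))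
          (Submodule.smul_mem _ _ (Submodule.subset_span (by simp)))
      all_goals simp
    · rw [hfr 1 (by simp), hm, nf]
      · exact ((finrank_span_finset_le_card _).trans Finset.card_le_three).trans (by omega)
      all_goals simp

/-- Any two star-closed subspaces of traceless matrices in `M_2(ℂ)` of the same dimension
are conjugate by a special unitary; hence a simple quantum graph on the quantum space
`M_2` is determined up to isomorphism solely by its number of quantum edges. -/
theorem stmt9 (V W : Submodule ℂ (Matrix (Fin 2) (Fin 2) ℂ))
    (hVtr : ∀ x ∈ V, x.trace = 0) (hWtr : ∀ x ∈ W, x.trace = 0)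
    (hVstar : ∀ x ∈ V, xᴴ ∈ V) (hWstar : ∀ x ∈ W, xᴴ ∈ W)
    (hdim : Module.finrank ℂ V = Module.finrank ℂ W) :
    ∃ U : Matrix (Fin 2) (Fin 2) ℂ, U ∈ Matrix.unitaryGroup (Fin 2) ℂ ∧ U.det = 1 ∧
      (W : Set (Matrix (Fin 2) (Fin 2) ℂ))
        = (fun x => U * x * Uᴴ) '' (V : Set (Matrix (Fin 2) (Fin 2) ℂ)) := by
  obtain ⟨A, a1, a2, a3, hA⟩ := exists_nf V hVtr hVstar
  obtain ⟨B, b1, b2, b3, hB⟩ := exists_nf W hWtr hWstar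
  rw [← hdim, ← hA] at hB
  have key : ∀ x, (Bᴴ * A) * x * (Bᴴ * A)ᴴ = Bᴴ * (A * x * Aᴴ) * B := by
    intro x
    rw [conjTranspose_mul, conjTranspose_conjTranspose]
    noncomm_ring
  refine ⟨Bᴴ * A, ?_, ?_, ?_⟩
  · rw [mem_unitaryGroup_iff, star_eq_conjTranspose]
    have := key 1
    rw [mul_one, mul_one, a2, mul_one, b1] at this
    exact this
  · rw [det_mul, det_conjTranspose, a3, b3]; simp
  · ext w
    constructor
    · intro hw
      have : conjL B w ∈ V.map (conjL A) := hB ▸ Submodule.mem_map_of_mem hw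
      obtain ⟨x, hx, hxw⟩ := this
      refine ⟨x, hx, ?_⟩
      rw [conjL_apply, conjL_apply] at hxw
      simp only
      rw [key, hxw, conjL_inv b1]
    · rintro ⟨x, hx, rfl⟩
      have : conjL A x ∈ W.map (conjL B) := hB ▸ Submodule.mem_map_of_mem hx
      obtain ⟨w, hw, hxw⟩ := this
      rw [conjL_apply, conjL_apply] at hxw
      simp only
      rw [key, ← hxw, conjL_inv b1]
      exact hw
end
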